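/- Let d, m ∈ ℕ, c, c̄, c̃, T ∈ [0,∞), p ∈ [2,∞), let O ⊆ ℝ^d be Borel, let μ : O → ℝ^d and σ : O → ℝ^{d×m} be Borel measurable, let (Ω, 𝓕, ℙ, (𝓕_t)_{t∈[0,T]}) be a filtered probability space, let W : [0,T]×Ω → ℝ^m be a standard (𝓕_t)-Brownian motion, let ξ : Ω → O be 𝓕₀-measurable with ‖ ‖ξ‖ + ‖μ(ξ)‖ ‖_{L^{(c̄ + max{1, c̄})·p}(Ω;ℝ)} < ∞, assume for all x, y ∈ O that ‖σ(x)‖_{HS} ≤ c̃(1+‖x‖^{c̄}), that ⟨x−y, μ(x)−μ(y)⟩ ≤ c‖x−y‖², and that ⟨x, μ(x)⟩ + (((c̄ + max{1, c̄})·p − 1)/2)·‖σ(x)‖_{HS}² ≤ c̃(1+‖x‖²), and assume that for every t ∈ (0, 1/c) the map O ∋ x ↦ x − t·μ(x) ∈ ℝ^d is surjective. Then there exists a unique family of stochastic processes Y^h : (ℕ₀ ∩ [0, T/h])×Ω → O, h ∈ (0,T] ∩ (0, 1/c), satisfying Y₀^h = ξ and Y_n^h = Y_{n−1}^h + μ(Y_n^h)·h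 + σ(Y_{n−1}^h)(W_{nh} − W_{(n−1)h}) for all n ∈ ℕ ∩ [0, T/h], and it holds that sup_{h∈(0,T]∩(0,1/(4c)]} ‖ sup_{n∈ℕ₀∩[0,T/h]} ‖Y_n^h‖ ‖_{L^p(Ω;ℝ)} < ∞. -/

import Mathlib

open MeasureTheory ProbabilityTheory Filter Set
open scoped ENNReal NNReal RealInnerProductSpace

noncomputable section

attribute [local instance] Matrix.frobeniusSeminormedAddCommGroup
  Matrix.frobeniusNormedAddCommGroup

/-- Action of a `d × m` matrix on a vector of `EuclideanSpace ℝ (Fin m)`. -/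
def matMulVec {d m : ℕ} (A : Matrix (Fin d) (Fin m) ℝ) (v : EuclideanSpace ℝ (Fin m)) :
    EuclideanSpace ℝ (Fin d) :=
  (EuclideanSpace.equiv (Fin d) ℝ).symm (A.mulVec ((EuclideanSpace.equiv (Fin m) ℝ) v))

/-- The drift-implicit Euler scheme with initial value `ξ`, drift `b`, diffusion `σ`
and driving noise `W`, for all step sizes `h ∈ (0,T] ∩ (0, 1/cdrift)`. -/
def ImplicitEulerScheme {Ω : Type*} (d m : ℕ) (T cdrift : ℝ)
    (O : Set (EuclideanSpace ℝ (Fin d)))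
    (b : EuclideanSpace ℝ (Fin d) → EuclideanSpace ℝ (Fin d))
    (σ : EuclideanSpace ℝ (Fin d) → Matrix (Fin d) (Fin m) ℝ)
    (ξ : Ω → EuclideanSpace ℝ (Fin d))
    (W : ℝ → Ω → EuclideanSpace ℝ (Fin m))
    (Y : ℝ → ℕ → Ω → EuclideanSpace ℝ (Fin d)) : Prop :=
  ∀ h : ℝ, h ∈ Set.Ioc (0:ℝ) T → h * cdrift < 1 →
    (∀ ω, Y h 0 ω = ξ ω) ∧
    ∀ n : ℕ, 1 ≤ n → (n : ℝ) ≤ T / h → ∀ ω,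
      Y h n ω ∈ O ∧
      Y h n ω = Y h (n - 1) ω + h • b (Y h n ω)
        + matMulVec (σ (Y h (n - 1) ω)) (W (n * h) ω - W (((n : ℕ) - 1 : ℕ) * h) ω)
/-!
For `h * c < 1` the one-sided Lipschitz condition makes `x ↦ x - h • b x` injective with Lipschitz
inverse, so every step of the scheme has exactly one solution and depends measurably on the data.

For the moments, put `Z n = Y n - h • b (Y n)`, so that `Z (n + 1) = Y n + σ (Y n) ΔW`. The Gaussian
moments of order `2 (k + 1)` have the sharp form
`𝔼 (1 + ‖x + A ΔW‖ ^ 2) ^ (k + 1) ≤ (1 + ‖x‖ ^ 2 + (2 k + 1) h ‖A‖ ^ 2) ^ (k + 1)`,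
and the coercivity condition bounds the right-hand side at `x = Y n` by a factor `exp (C h)` times
`(1 + ‖Z n‖ ^ 2) ^ (k + 1)`. This process is therefore a supermartingale up to a factor per step
whose product over `T / h` steps stays bounded. A maximal inequality of order `p / (2 (k + 1)) < 1`
controls its running maximum, and `4 c h ≤ 1` allows `‖Y n‖` to be bounded by `‖Z n‖` uniformly in
`h`. Taking `k = ⌊p / 2⌋` gives `p < 2 (k + 1)` and keeps `2 k + 1` within the coefficient that the
coercivity hypothesis provides when `σ` grows superlinearly.
-/


section Gaussian

section Real

variable {a : ℝ} {v : ℝ≥0}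

lemma integrable_pow_gaussianReal (n : ℕ) : Integrable (fun x ↦ x ^ n) (gaussianReal a v) := by
  refine (memLp_id_gaussianReal (n : ℝ≥0)).integrable_norm_pow' (p := n) |>.mono' (by fun_prop) ?_
  simp

lemma hasDerivAt_gaussianPDFReal (a : ℝ) (v : ℝ≥0) (x : ℝ) :
    HasDerivAt (gaussianPDFReal a v) (-((x - a) / v) * gaussianPDFReal a v x) x := by
  have hexponent : HasDerivAt (fun x : ℝ ↦ -(x - a) ^ 2 / (2 * v)) (-((x - a) / v)) x := by
    refine (((hasDerivAt_id x).sub_const a).pow 2).neg.div_const (2 * (v : ℝ)) |>.congr_deriv ?_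
    norm_num
    ring
  simp only [gaussianPDFReal_def]
  exact (hexponent.exp.const_mul (√(2 * Real.pi * v))⁻¹).congr_deriv (by ring)

lemma integrable_mul_gaussianPDFReal {f : ℝ → ℝ} (hv : v ≠ 0)
    (hf : Integrable f (gaussianReal a v)) :
    Integrable (fun x ↦ f x * gaussianPDFReal a v x) := by
  rw [gaussianReal_of_var_ne_zero _ hv, integrable_withDensity_iff_integrable_smul'
    (measurable_gaussianPDF a v) (ae_of_all _ fun _ ↦ gaussianPDF_lt_top)] at hf
  simpa [toReal_gaussianPDF, mul_comm] using hf

/-- The **Stein identity**. -/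
theorem integral_sub_mul_gaussianReal {f f' : ℝ → ℝ} (hderiv : ∀ x, HasDerivAt f (f' x) x)
    (hf : Integrable f (gaussianReal a v)) (hf' : Integrable f' (gaussianReal a v))
    (hmul : Integrable (fun x ↦ (x - a) * f x) (gaussianReal a v)) :
    ∫ x, (x - a) * f x ∂gaussianReal a v = v * ∫ x, f' x ∂gaussianReal a v := by
  rcases eq_or_ne v 0 with rfl | hv
  · simp
  have hv' : (v : ℝ) ≠ 0 := by simpa using hv
  have hparts := integral_mul_deriv_eq_deriv_mul_of_integrable
    (fun x _ ↦ hderiv x) (fun x _ ↦ hasDerivAt_gaussianPDFReal a v x)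
    ((integrable_mul_gaussianPDFReal hv (hmul.const_mul (-(v : ℝ)⁻¹))).congr
      (ae_of_all _ fun x ↦ by simp only [Pi.mul_apply]; ring))
    (integrable_mul_gaussianPDFReal hv hf') (integrable_mul_gaussianPDFReal hv hf)
  rw [integral_gaussianReal_eq_integral_smul hv, integral_gaussianReal_eq_integral_smul hv]
  calc ∫ x, gaussianPDFReal a v x • ((x - a) * f x)
      = -v * ∫ x, f x * (-((x - a) / v) * gaussianPDFReal a v x) := by
        rw [← integral_const_mul]
        congr with x
        simp only [smul_eq_mul]
        field_simp
    _ = v * ∫ x, gaussianPDFReal a v x • f' x := by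
        simp only [hparts, smul_eq_mul, neg_mul_neg, mul_comm (f' _)]

lemma integral_pow_add_two_gaussianReal (n : ℕ) :
    ∫ x, x ^ (n + 2) ∂gaussianReal a v = a * ∫ x, x ^ (n + 1) ∂gaussianReal a v
      + (n + 1) * v * ∫ x, x ^ n ∂gaussianReal a v := by
  have hint (j : ℕ) : Integrable (fun x ↦ x ^ j) (gaussianReal a v) := integrable_pow_gaussianReal j
  have hsub : (fun x : ℝ ↦ (x - a) * x ^ (n + 1)) = fun x ↦ x ^ (n + 2) - a * x ^ (n + 1) := by
    ext x; ring
  have hmul := (hint (n + 2)).sub ((hint (n + 1)).const_mul a)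
  have hstein := integral_sub_mul_gaussianReal (a := a) (v := v)
    (fun x ↦ hasDerivAt_pow (n + 1) x) (hint _) ((hint _).const_mul _) (hsub ▸ hmul)
  rw [hsub, integral_sub (hint _) ((hint _).const_mul a), integral_const_mul,
    integral_const_mul] at hstein
  push_cast at hstein
  linear_combination hstein

lemma integral_pow_even_nonneg (μ : Measure ℝ) (k : ℕ) : 0 ≤ ∫ x, x ^ (2 * k) ∂μ :=
  integral_nonneg fun x ↦ (even_two_mul k).pow_nonneg x

lemma integral_pow_even_succ_gaussianReal_le (k : ℕ) :
    ∫ x, x ^ (2 * (k + 1)) ∂gaussianReal a v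
      ≤ (a ^ 2 + (4 * k + 1) * v) * ∫ x, x ^ (2 * k) ∂gaussianReal a v := by
  set M : ℕ → ℝ := fun n ↦ ∫ x, x ^ n ∂gaussianReal a v
  have hrec (n : ℕ) : M (n + 2) = a * M (n + 1) + (n + 1) * v * M n :=
    integral_pow_add_two_gaussianReal n
  change M (2 * k + 2) ≤ (a ^ 2 + (4 * k + 1) * v) * M (2 * k)
  have hM : 0 ≤ M (2 * k) := integral_pow_even_nonneg _ k
  cases k with
  | zero =>
    have hM0 : M 0 = 1 := by simp [M]
    have hM1 : M 1 = a := by simp [M, integral_id_gaussianReal]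
    have h := hrec 0
    norm_num [hM0, hM1] at h ⊢
    nlinarith
  | succ j =>
    have hodd : a * M (2 * j + 1) ≤ M (2 * j + 2) := by
      have := mul_nonneg (by positivity : 0 ≤ (2 * j + 1 : ℝ) * v)
        (integral_pow_even_nonneg (gaussianReal a v) j)
      have h := hrec (2 * j)
      push_cast at h
      linarith
    have hodd_mul := mul_le_mul_of_nonneg_left hodd (by positivity : 0 ≤ (2 * j + 2 : ℝ) * v)
    have h₁ := hrec (2 * j + 1)
    have h₂ := hrec (2 * j + 2)
    simp only [mul_add, mul_one, add_assoc, Nat.reduceAdd] at h₁ h₂ hodd_mul ⊢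
    push_cast at h₁ h₂ ⊢
    rw [h₂, h₁]
    linarith

lemma sub_pow_mul_add_le_pow {x y : ℝ} (hy : 0 ≤ y) (hyx : y ≤ x) (n : ℕ) :
    (x - y) ^ n * (x + n * y) ≤ x ^ (n + 1) := by
  have hx : 0 ≤ x := hy.trans hyx
  have : 0 ≤ x - y := sub_nonneg.2 hyx
  induction n with
  | zero => simp
  | succ n ih =>
    calc (x - y) ^ (n + 1) * (x + (n + 1 : ℕ) * y)
        = (x - y) ^ n * (x * (x + n * y) - (n + 1) * y ^ 2) := by push_cast; ring
      _ ≤ (x - y) ^ n * (x * (x + n * y)) := by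
        gcongr
        exact sub_le_self _ (by positivity)
      _ = x * ((x - y) ^ n * (x + n * y)) := by ring
      _ ≤ x * x ^ (n + 1) := by gcongr
      _ = x ^ (n + 1 + 1) := by ring

theorem integral_pow_even_gaussianReal_le (k : ℕ) :
    ∫ x, x ^ (2 * (k + 1)) ∂gaussianReal a v ≤ (a ^ 2 + (2 * k + 1) * v) ^ (k + 1) := by
  induction k with
  | zero => simpa using integral_pow_even_succ_gaussianReal_le (a := a) (v := v) 0
  | succ k ih =>
    have hmean := sub_pow_mul_add_le_pow (x := a ^ 2 + (2 * k + 3) * v) (y := 2 * v)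
      (by positivity) (by nlinarith [sq_nonneg a, mul_nonneg k.cast_nonneg v.coe_nonneg]) (k + 1)
    calc ∫ x, x ^ (2 * (k + 1 + 1)) ∂gaussianReal a v
        ≤ (a ^ 2 + (4 * (k + 1 : ℕ) + 1) * v) * ∫ x, x ^ (2 * (k + 1)) ∂gaussianReal a v :=
          integral_pow_even_succ_gaussianReal_le (k + 1)
      _ ≤ (a ^ 2 + (4 * (k + 1 : ℕ) + 1) * v) * (a ^ 2 + (2 * k + 1) * v) ^ (k + 1) := by gcongr
      _ = (a ^ 2 + (2 * k + 3) * v - 2 * v) ^ (k + 1)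
            * (a ^ 2 + (2 * k + 3) * v + (k + 1 : ℕ) * (2 * v)) := by push_cast; ring
      _ ≤ (a ^ 2 + (2 * (k + 1 : ℕ) + 1) * v) ^ (k + 1 + 1) := by
        convert hmean using 2
        push_cast; ring

lemma lintegral_enorm_pow_even_gaussianReal_le (k : ℕ) :
    ∫⁻ x, ‖x‖ₑ ^ (2 * (k + 1)) ∂gaussianReal a v
      ≤ (‖a‖ₑ ^ 2 + (2 * k + 1) * v) ^ (k + 1) := by
  have hbound := ENNReal.ofReal_le_ofReal (integral_pow_even_gaussianReal_le (a := a) (v := v) k)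
  rw [ofReal_integral_eq_lintegral_ofReal (integrable_pow_gaussianReal _)
    (ae_of_all _ fun x ↦ (even_two_mul (k + 1)).pow_nonneg x)] at hbound
  convert hbound using 1
  · congr with x
    rw [← enorm_pow, Real.enorm_of_nonneg ((even_two_mul (k + 1)).pow_nonneg x)]
  · rw [ENNReal.ofReal_pow (by positivity), ENNReal.ofReal_add (by positivity) (by positivity),
      ENNReal.ofReal_mul (by positivity), ENNReal.ofReal_coe_nnreal, ← enorm_pow,
      Real.enorm_of_nonneg (sq_nonneg a)]
    congr
    rw [ENNReal.ofReal_add (by positivity) zero_le_one, ENNReal.ofReal_mul zero_le_two]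
    simp

lemma lintegral_enorm_pow_stdGaussianReal_ne_top (n : ℕ) :
    ∫⁻ x, ‖x‖ₑ ^ n ∂gaussianReal 0 1 ≠ ∞ := by
  simpa [HasFiniteIntegral] using (integrable_pow_gaussianReal (a := 0) (v := 1) n).2.ne

lemma lintegral_enorm_pow_stdGaussianReal_ne_zero (n : ℕ) :
    ∫⁻ x, ‖x‖ₑ ^ n ∂gaussianReal 0 1 ≠ 0 := by
  have := nullSingletonClass_gaussianReal (μ := 0) (v := 1) one_ne_zero
  have hne : ∀ᵐ x ∂gaussianReal 0 1, x ≠ 0 := by simp [ae_iff]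
  rw [Ne, lintegral_eq_zero_iff (by fun_prop)]
  intro hzero
  obtain ⟨x, hx, hpow⟩ := (hne.and hzero).exists
  exact pow_ne_zero n (enorm_ne_zero.2 hx) hpow

end Real

section Minkowski

variable {α ι : Type*} [MeasurableSpace α] {μ : Measure α} {n : ℕ} {C : ℝ≥0∞}

lemma lintegral_add_pow_le {f g : α → ℝ≥0∞} {a b : ℝ≥0∞} (hf : Measurable f) (hg : Measurable g)
    (hn : n ≠ 0) (hfa : ∫⁻ x, f x ^ n ∂μ ≤ C * a ^ n) (hgb : ∫⁻ x, g x ^ n ∂μ ≤ C * b ^ n) :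
    ∫⁻ x, (f x + g x) ^ n ∂μ ≤ C * (a + b) ^ n := by
  have hn' : (n : ℝ) ≠ 0 := Nat.cast_ne_zero.2 hn
  have hroot {I c : ℝ≥0∞} (hI : I ≤ C * c ^ n) : I ^ (1 / n : ℝ) ≤ C ^ (1 / n : ℝ) * c := by
    refine (ENNReal.rpow_le_rpow hI (by positivity)).trans_eq ?_
    rw [ENNReal.mul_rpow_of_nonneg _ _ (by positivity), ← ENNReal.rpow_natCast c,
      ← ENNReal.rpow_mul, mul_one_div_cancel hn', ENNReal.rpow_one]
  have hsum : (∫⁻ x, (f x + g x) ^ n ∂μ) ^ (1 / n : ℝ) ≤ C ^ (1 / n : ℝ) * (a + b) := by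
    have := ENNReal.lintegral_Lp_add_le (μ := μ) hf.aemeasurable hg.aemeasurable
      (Nat.one_le_cast.2 (Nat.one_le_iff_ne_zero.2 hn))
    simp only [Pi.add_apply, ENNReal.rpow_natCast] at this
    exact this.trans ((add_le_add (hroot hfa) (hroot hgb)).trans_eq (mul_add _ _ _).symm)
  have hpow := pow_le_pow_left' hsum n
  rwa [mul_pow, ← ENNReal.rpow_natCast, ← ENNReal.rpow_natCast (C ^ (1 / n : ℝ)),
    ← ENNReal.rpow_mul, ← ENNReal.rpow_mul, one_div_mul_cancel hn', ENNReal.rpow_one,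
    ENNReal.rpow_one] at hpow

lemma lintegral_sum_pow_le {f : ι → α → ℝ≥0∞} {a : ι → ℝ≥0∞} (s : Finset ι)
    (hf : ∀ i, Measurable (f i)) (hn : n ≠ 0) (hfa : ∀ i, ∫⁻ x, f i x ^ n ∂μ ≤ C * a i ^ n) :
    ∫⁻ x, (∑ i ∈ s, f i x) ^ n ∂μ ≤ C * (∑ i ∈ s, a i) ^ n := by
  classical
  induction s using Finset.induction_on with
  | empty => simp [hn]
  | insert i s hi ih =>
    simp only [Finset.sum_insert hi]
    exact lintegral_add_pow_le (hf i) (Finset.measurable_fun_sum s fun j _ ↦ hf j) hn (hfa i) ih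

end Minkowski

section Vector

variable {E ι : Type*} [NormedAddCommGroup E] [InnerProductSpace ℝ E] [FiniteDimensional ℝ E]
  [MeasurableSpace E] [BorelSpace E]

lemma lintegral_enorm_inner_pow_stdGaussian (v : E) (n : ℕ) :
    ∫⁻ g, ‖⟪v, g⟫‖ₑ ^ n ∂stdGaussian E = (∫⁻ x, ‖x‖ₑ ^ n ∂gaussianReal 0 1) * ‖v‖ₑ ^ n := by
  have hlaw : (stdGaussian E).map (innerSL ℝ v) = (gaussianReal 0 1).map (‖v‖ * ·) := by
    rw [IsGaussian.map_eq_gaussianReal, integral_strongDual_stdGaussian, variance_dual_stdGaussian,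
      gaussianReal_map_const_mul]
    congr 1
    · simp
    · ext; simp
  calc ∫⁻ g, ‖⟪v, g⟫‖ₑ ^ n ∂stdGaussian E
      = ∫⁻ x, ‖x‖ₑ ^ n ∂(stdGaussian E).map (innerSL ℝ v) := by
        rw [lintegral_map (by fun_prop) (by fun_prop)]
        simp
    _ = _ := by
        rw [hlaw, lintegral_map (by fun_prop) (by fun_prop), ← lintegral_mul_const _ (by fun_prop)]
        simp [enorm_mul, mul_pow, mul_comm]

variable {ν : Measure E} [IsProbabilityMeasure ν] [Fintype ι] {y : E} {w : ι → E}

-- Averaging over an independent standard Gaussian vector `g` turns `‖x‖` into `⟪x, g⟫`, whose law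
-- for fixed `g` is known; Minkowski's inequality in `g` then recovers the sharp one-dimensional
-- constant.
theorem lintegral_enorm_pow_even_le_of_map_inner_eq_gaussianReal
    (hν : ∀ g, ν.map (fun x ↦ ⟪g, x⟫) = gaussianReal ⟪g, y⟫ (∑ j, ‖⟪g, w j⟫‖₊ ^ 2)) (k : ℕ) :
    ∫⁻ x, ‖x‖ₑ ^ (2 * (k + 1)) ∂ν
      ≤ (‖y‖ₑ ^ 2 + (2 * k + 1) * ∑ j, ‖w j‖ₑ ^ 2) ^ (k + 1) := by
  set c := ∫⁻ x, ‖x‖ₑ ^ (2 * (k + 1)) ∂gaussianReal 0 1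
  have hinner (v : E) : ∫⁻ g, (‖⟪v, g⟫‖ₑ ^ 2) ^ (k + 1) ∂stdGaussian E
      = c * (‖v‖ₑ ^ 2) ^ (k + 1) := by
    simpa only [← pow_mul] using lintegral_enorm_inner_pow_stdGaussian v (2 * (k + 1))
  have hscaled (j : ι) :
      ∫⁻ g, ((2 * k + 1) * ‖⟪w j, g⟫‖ₑ ^ 2) ^ (k + 1) ∂stdGaussian E
        ≤ c * ((2 * k + 1) * ‖w j‖ₑ ^ 2) ^ (k + 1) := by
    simp only [mul_pow ((2 : ℝ≥0∞) * k + 1)]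
    rw [lintegral_const_mul _ (by fun_prop), hinner, mul_left_comm]
  have hfixed (g : E) : ∫⁻ x, ‖⟪x, g⟫‖ₑ ^ (2 * (k + 1)) ∂ν
      ≤ (‖⟪y, g⟫‖ₑ ^ 2 + ∑ j, (2 * k + 1) * ‖⟪w j, g⟫‖ₑ ^ 2) ^ (k + 1) := by
    have hmap : ∫⁻ x, ‖⟪x, g⟫‖ₑ ^ (2 * (k + 1)) ∂ν
        = ∫⁻ x, ‖x‖ₑ ^ (2 * (k + 1)) ∂ν.map (fun x ↦ ⟪g, x⟫) := by
      rw [lintegral_map (by fun_prop) (by fun_prop)]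
      simp only [real_inner_comm]
    rw [hmap, hν, ← Finset.mul_sum, real_inner_comm g y]
    simp only [real_inner_comm g]
    convert lintegral_enorm_pow_even_gaussianReal_le k
    push_cast
    rfl
  rw [← ENNReal.mul_le_mul_iff_right (lintegral_enorm_pow_stdGaussianReal_ne_zero (2 * (k + 1)))
    (lintegral_enorm_pow_stdGaussianReal_ne_top _), ← lintegral_const_mul _ (by fun_prop)]
  calc ∫⁻ x, c * ‖x‖ₑ ^ (2 * (k + 1)) ∂ν
      = ∫⁻ x, ∫⁻ g, ‖⟪x, g⟫‖ₑ ^ (2 * (k + 1)) ∂stdGaussian E ∂ν := by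
        simp_rw [lintegral_enorm_inner_pow_stdGaussian]; rfl
    _ = ∫⁻ g, ∫⁻ x, ‖⟪x, g⟫‖ₑ ^ (2 * (k + 1)) ∂ν ∂stdGaussian E :=
        lintegral_lintegral_swap (by fun_prop)
    _ ≤ ∫⁻ g, (‖⟪y, g⟫‖ₑ ^ 2 + ∑ j, (2 * k + 1) * ‖⟪w j, g⟫‖ₑ ^ 2) ^ (k + 1) ∂stdGaussian E :=
        lintegral_mono hfixed
    _ ≤ c * (‖y‖ₑ ^ 2 + ∑ j, (2 * k + 1) * ‖w j‖ₑ ^ 2) ^ (k + 1) :=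
        lintegral_add_pow_le (by fun_prop) (by fun_prop) k.succ_ne_zero (hinner y).le
          (lintegral_sum_pow_le _ (by fun_prop) k.succ_ne_zero hscaled)
    _ = _ := by rw [Finset.mul_sum]

lemma lintegral_one_add_enorm_sq_pow_le_of_map_inner_eq_gaussianReal
    (hν : ∀ g, ν.map (fun x ↦ ⟪g, x⟫) = gaussianReal ⟪g, y⟫ (∑ j, ‖⟪g, w j⟫‖₊ ^ 2)) (k : ℕ) :
    ∫⁻ x, (1 + ‖x‖ₑ ^ 2) ^ (k + 1) ∂ν
      ≤ (1 + (‖y‖ₑ ^ 2 + (2 * k + 1) * ∑ j, ‖w j‖ₑ ^ 2)) ^ (k + 1) := by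
  have hmoment := lintegral_enorm_pow_even_le_of_map_inner_eq_gaussianReal hν k
  simp only [pow_mul _ 2] at hmoment
  simpa using lintegral_add_pow_le (f := fun _ ↦ 1) (C := 1) (a := 1) (by fun_prop) (by fun_prop)
    k.succ_ne_zero (by simp) (by simpa using hmoment)

end Vector

end Gaussian

section MatMulVec

variable {d m : ℕ}

@[simp]
lemma matMulVec_apply (A : Matrix (Fin d) (Fin m) ℝ) (u : EuclideanSpace ℝ (Fin m)) (i : Fin d) :
    matMulVec A u i = ∑ j, A i j * u j := rfl

lemma inner_matMulVec_right (A : Matrix (Fin d) (Fin m) ℝ) (x : EuclideanSpace ℝ (Fin d))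
    (u : EuclideanSpace ℝ (Fin m)) : ⟪x, matMulVec A u⟫ = ⟪matMulVec A.transpose x, u⟫ := by
  simp only [PiLp.inner_apply, matMulVec_apply, Matrix.transpose_apply, RCLike.inner_apply,
    conj_trivial, Finset.mul_sum, Finset.sum_mul]
  rw [Finset.sum_comm]
  exact Finset.sum_congr rfl fun _ _ ↦ Finset.sum_congr rfl fun _ _ ↦ by ring

lemma frobenius_norm_sq_eq_sum_matMulVec_single (A : Matrix (Fin d) (Fin m) ℝ) :
    ‖A‖ ^ 2 = ∑ j, ‖matMulVec A (EuclideanSpace.single j 1)‖ ^ 2 := by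
  rw [Matrix.frobenius_norm_def, ← Real.sqrt_eq_rpow, Real.sq_sqrt (by positivity),
    Finset.sum_comm]
  simp [EuclideanSpace.norm_sq_eq]

@[fun_prop]
lemma measurable_matMulVec {α : Type*} {_ : MeasurableSpace α} {A : α → Matrix (Fin d) (Fin m) ℝ}
    {u : α → EuclideanSpace ℝ (Fin m)} (hA : ∀ i j, Measurable fun x ↦ A x i j)
    (hu : Measurable u) : Measurable fun x ↦ matMulVec (A x) (u x) := by
  have : Measurable fun x i ↦ ∑ j, A x i j * u x j :=
    measurable_pi_lambda _ fun i ↦ Finset.measurable_fun_sum _ fun j _ ↦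
      (hA i j).mul (by fun_prop)
  exact (WithLp.measurable_toLp 2 _).comp this

variable {ν : Measure (EuclideanSpace ℝ (Fin m))} {h : ℝ}

lemma map_inner_add_matMulVec_eq_gaussianReal (hh : 0 ≤ h)
    (hν : ∀ l, ν.map (fun u ↦ ⟪l, u⟫) = gaussianReal 0 (h * ‖l‖ ^ 2).toNNReal)
    (y g : EuclideanSpace ℝ (Fin d)) (A : Matrix (Fin d) (Fin m) ℝ) :
    (ν.map fun u ↦ y + matMulVec A u).map (fun x ↦ ⟪g, x⟫) = gaussianReal ⟪g, y⟫
      (∑ j, ‖⟪g, √h • matMulVec A (EuclideanSpace.single j 1)⟫‖₊ ^ 2) := by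
  have hvar : ∑ j, ‖⟪g, √h • matMulVec A (EuclideanSpace.single j 1)⟫‖₊ ^ 2
      = (h * ‖matMulVec A.transpose g‖ ^ 2).toNNReal := by
    ext
    rw [Real.coe_toNNReal _ (by positivity), EuclideanSpace.norm_sq_eq, Finset.mul_sum]
    push_cast
    simp only [inner_smul_right, norm_mul, mul_pow, Real.norm_of_nonneg (Real.sqrt_nonneg h),
      Real.sq_sqrt hh, inner_matMulVec_right A g, EuclideanSpace.inner_single_right]
    simp
  have hadd : (fun u ↦ ⟪g, y + matMulVec A u⟫)
      = (⟪g, y⟫ + ·) ∘ fun u ↦ ⟪matMulVec A.transpose g, u⟫ := by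
    ext u
    simp [inner_add_right, inner_matMulVec_right]
  rw [Measure.map_map (by fun_prop) (by fun_prop), hvar]
  change ν.map (fun u ↦ ⟪g, y + matMulVec A u⟫) = _
  rw [hadd, ← Measure.map_map (by fun_prop) (by fun_prop), hν, gaussianReal_map_const_add, zero_add]

lemma lintegral_one_add_enorm_add_matMulVec_sq_pow_le [IsProbabilityMeasure ν] (hh : 0 ≤ h)
    (hν : ∀ l, ν.map (fun u ↦ ⟪l, u⟫) = gaussianReal 0 (h * ‖l‖ ^ 2).toNNReal)
    (y : EuclideanSpace ℝ (Fin d)) (A : Matrix (Fin d) (Fin m) ℝ) (k : ℕ) :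
    ∫⁻ u, (1 + ‖y + matMulVec A u‖ₑ ^ 2) ^ (k + 1) ∂ν
      ≤ ENNReal.ofReal (1 + ‖y‖ ^ 2 + (2 * k + 1) * h * ‖A‖ ^ 2) ^ (k + 1) := by
  have hmeas : Measurable fun u ↦ y + matMulVec A u := by fun_prop
  have := Measure.isProbabilityMeasure_map (μ := ν) hmeas.aemeasurable
  have hbound := lintegral_one_add_enorm_sq_pow_le_of_map_inner_eq_gaussianReal
    (map_inner_add_matMulVec_eq_gaussianReal hh hν y · A) k
  rw [lintegral_map (by fun_prop) hmeas] at hbound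
  convert hbound using 2
  have hsum : ∑ j, ‖√h • matMulVec A (EuclideanSpace.single j 1)‖ₑ ^ 2
      = ENNReal.ofReal (h * ‖A‖ ^ 2) := by
    simp_rw [← ofReal_norm, ← ENNReal.ofReal_pow (norm_nonneg _)]
    rw [← ENNReal.ofReal_sum_of_nonneg fun _ _ ↦ by positivity]
    simp [norm_smul, mul_pow, Real.sq_sqrt hh, frobenius_norm_sq_eq_sum_matMulVec_single,
      Finset.mul_sum]
  rw [hsum, ← ofReal_norm, ← ENNReal.ofReal_pow (norm_nonneg _), add_assoc, mul_assoc,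
    ENNReal.ofReal_add zero_le_one (by positivity), ENNReal.ofReal_add (by positivity)
    (by positivity), ENNReal.ofReal_mul (p := 2 * (k : ℝ) + 1) (by positivity),
    ENNReal.ofReal_add (by positivity) zero_le_one, ENNReal.ofReal_mul zero_le_two]
  simp

end MatMulVec

section MaximalInequality

section Pointwise

variable {η θ : ℝ≥0}

lemma rpow_neg_mul_self_le_rpow (hsum : η + θ = 1) (x : ℝ≥0∞) :
    x ^ (-η : ℝ) * x ≤ x ^ (θ : ℝ) := by
  rcases eq_or_ne x 0 with rfl | hx
  · simp
  rcases eq_or_ne x ∞ with rfl | hx'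
  · rcases eq_or_ne θ 0 with rfl | hθ
    · simp [show η = 1 by simpa using hsum]
    · simp [ENNReal.top_rpow_of_pos (NNReal.coe_pos.2 (pos_iff_ne_zero.2 hθ))]
  have hexp : (θ : ℝ) = -η + 1 := by
    have := congrArg NNReal.toReal hsum
    push_cast at this
    linarith
  rw [hexp, ENNReal.rpow_add _ _ hx hx', ENNReal.rpow_one]

lemma rpow_le_mul_rpow_add_mul_rpow_neg_mul (hη : η ≠ 0) (hθ : θ ≠ 0) (hsum : η + θ = 1)
    (m s : ℝ≥0∞) : s ^ (θ : ℝ) ≤ η * m ^ (θ : ℝ) + θ * (m ^ (-η : ℝ) * s) := by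
  have hη' : (0 : ℝ) < η := NNReal.coe_pos.2 (pos_iff_ne_zero.2 hη)
  have hθ' : (0 : ℝ) < θ := NNReal.coe_pos.2 (pos_iff_ne_zero.2 hθ)
  rcases eq_or_ne s 0 with rfl | hs
  · simp [hθ']
  cases m with
  | top => simp [hη, hθ']
  | coe m =>
    rcases eq_or_ne m 0 with rfl | hm
    · simp [ENNReal.zero_rpow_of_neg, hη', ENNReal.top_mul hs, hθ]
    cases s with
    | top => simp [ENNReal.mul_top, hm, hθ, ENNReal.rpow_eq_zero_iff]
    | coe s =>
      have hmean := NNReal.geom_mean_le_arith_mean2_weighted η θ (m ^ (θ : ℝ)) (m ^ (-η : ℝ) * s)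
        hsum
      rw [NNReal.mul_rpow, ← NNReal.rpow_mul, ← NNReal.rpow_mul, ← mul_assoc,
        ← NNReal.rpow_add hm, show (θ * η + -η * θ : ℝ) = 0 by ring, NNReal.rpow_zero,
        one_mul] at hmean
      rw [← ENNReal.coe_rpow_of_nonneg _ hθ'.le, ← ENNReal.coe_rpow_of_nonneg _ hθ'.le,
        ← ENNReal.coe_rpow_of_ne_zero hm]
      exact_mod_cast hmean

end Pointwise

variable {Ω : Type*} {mΩ : MeasurableSpace Ω} {P : Measure Ω} {ℱ : Filtration ℕ mΩ}
  {X : ℕ → Ω → ℝ≥0∞} {ρ : ℝ≥0∞} {N : ℕ}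

/-- Up to time `N`, the `[0, ∞]`-valued adapted process `X` satisfies
`𝔼[X (n + 1) | ℱ n] ≤ ρ X n`.
Testing against all `ℱ n`-measurable weights avoids any integrability assumption. -/
structure IsSupermartingaleUpToFactor (ℱ : Filtration ℕ mΩ) (P : Measure Ω)
    (X : ℕ → Ω → ℝ≥0∞) (ρ : ℝ≥0∞) (N : ℕ) : Prop where
  measurable : ∀ n ≤ N, Measurable[ℱ n] (X n)
  lintegral_mul_succ_le : ∀ n < N, ∀ g : Ω → ℝ≥0∞, Measurable[ℱ n] g →
    ∫⁻ ω, g ω * X (n + 1) ω ∂P ≤ ρ * ∫⁻ ω, g ω * X n ω ∂P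

namespace IsSupermartingaleUpToFactor

lemma measurable_partialSups (hX : IsSupermartingaleUpToFactor ℱ P X ρ N) {n : ℕ} (hn : n ≤ N) :
    Measurable[ℱ n] (partialSups X n) := by
  induction n with
  | zero => simpa using hX.measurable 0 hn
  | succ n ih =>
    rw [partialSups_add_one]
    exact ((ih (by lia)).mono (ℱ.mono n.le_succ) le_rfl).sup (hX.measurable _ hn)

/-- The potential `η M ^ θ + θ M ^ (-η) X` built on the running maximum `M` of `X`, which dominates
`η M ^ θ` and inherits the supermartingale property of `X`. -/
def potential (X : ℕ → Ω → ℝ≥0∞) (η θ : ℝ≥0) (n : ℕ) (ω : Ω) : ℝ≥0∞ :=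
  η * partialSups X n ω ^ (θ : ℝ) + θ * (partialSups X n ω ^ (-η : ℝ) * X n ω)

variable {η θ : ℝ≥0}

lemma potential_zero_le (hsum : η + θ = 1) (ω : Ω) :
    potential X η θ 0 ω ≤ X 0 ω ^ (θ : ℝ) :=
  calc potential X η θ 0 ω
      ≤ η * X 0 ω ^ (θ : ℝ) + θ * X 0 ω ^ (θ : ℝ) := by
        simp only [potential, partialSups_zero]
        gcongr
        exact rpow_neg_mul_self_le_rpow hsum _
    _ = X 0 ω ^ (θ : ℝ) := by rw [← add_mul, ← ENNReal.coe_add, hsum, ENNReal.coe_one, one_mul]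

lemma potential_succ_le (hη : η ≠ 0) (hθ : θ ≠ 0) (hsum : η + θ = 1) (n : ℕ) (ω : Ω) :
    potential X η θ (n + 1) ω
      ≤ η * partialSups X n ω ^ (θ : ℝ) + θ * (partialSups X n ω ^ (-η : ℝ) * X (n + 1) ω) := by
  rcases le_total (X (n + 1) ω) (partialSups X n ω) with hle | hle
  · simp [potential, partialSups_add_one, hle]
  calc potential X η θ (n + 1) ω
      ≤ η * X (n + 1) ω ^ (θ : ℝ) + θ * X (n + 1) ω ^ (θ : ℝ) := by
        simp only [potential, partialSups_add_one, Pi.sup_apply, sup_of_le_right hle]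
        gcongr
        exact rpow_neg_mul_self_le_rpow hsum _
    _ = X (n + 1) ω ^ (θ : ℝ) := by
        rw [← add_mul, ← ENNReal.coe_add, hsum, ENNReal.coe_one, one_mul]
    _ ≤ _ := rpow_le_mul_rpow_add_mul_rpow_neg_mul hη hθ hsum _ _

lemma lintegral_potential_succ_le (hX : IsSupermartingaleUpToFactor ℱ P X ρ N) (hρ : 1 ≤ ρ)
    (hη : η ≠ 0) (hθ : θ ≠ 0) (hsum : η + θ = 1) {n : ℕ} (hn : n < N) :
    ∫⁻ ω, potential X η θ (n + 1) ω ∂P ≤ ρ * ∫⁻ ω, potential X η θ n ω ∂P := by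
  have hM := hX.measurable_partialSups hn.le
  have hM' := hM.mono (ℱ.le n) le_rfl
  set I := ∫⁻ ω, partialSups X n ω ^ (θ : ℝ) ∂P
  have hsplit (j : ℕ) : ∫⁻ ω, (η * partialSups X n ω ^ (θ : ℝ)
      + θ * (partialSups X n ω ^ (-η : ℝ) * X j ω)) ∂P
      = η * I + θ * ∫⁻ ω, partialSups X n ω ^ (-η : ℝ) * X j ω ∂P := by
    rw [lintegral_add_left (by fun_prop), lintegral_const_mul _ (by fun_prop),
      lintegral_const_mul' _ _ ENNReal.coe_ne_top]
  calc ∫⁻ ω, potential X η θ (n + 1) ω ∂P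
      ≤ η * I + θ * ∫⁻ ω, partialSups X n ω ^ (-η : ℝ) * X (n + 1) ω ∂P :=
        (lintegral_mono (potential_succ_le hη hθ hsum n)).trans_eq (hsplit _)
    _ ≤ ρ * (η * I) + θ * (ρ * ∫⁻ ω, partialSups X n ω ^ (-η : ℝ) * X n ω ∂P) :=
        add_le_add (le_mul_of_one_le_left' hρ)
          (mul_le_mul_right (hX.lintegral_mul_succ_le n hn _ (hM.pow_const _)) _)
    _ = ρ * ∫⁻ ω, potential X η θ n ω ∂P := by
        simp only [potential, hsplit]
        ring

theorem mul_lintegral_partialSups_rpow_le (hX : IsSupermartingaleUpToFactor ℱ P X ρ N)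
    (hρ : 1 ≤ ρ) (hη : η ≠ 0) (hθ : θ ≠ 0) (hsum : η + θ = 1) :
    η * ∫⁻ ω, partialSups X N ω ^ (θ : ℝ) ∂P ≤ ρ ^ N * ∫⁻ ω, X 0 ω ^ (θ : ℝ) ∂P := by
  have hgrowth (n : ℕ) (hn : n ≤ N) :
      ∫⁻ ω, potential X η θ n ω ∂P ≤ ρ ^ n * ∫⁻ ω, potential X η θ 0 ω ∂P := by
    induction n with
    | zero => simp
    | succ n ih =>
      grw [hX.lintegral_potential_succ_le hρ hη hθ hsum (by lia), ih (by lia), pow_succ', mul_assoc]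
  calc η * ∫⁻ ω, partialSups X N ω ^ (θ : ℝ) ∂P
      = ∫⁻ ω, η * partialSups X N ω ^ (θ : ℝ) ∂P :=
        (lintegral_const_mul' _ _ ENNReal.coe_ne_top).symm
    _ ≤ ∫⁻ ω, potential X η θ N ω ∂P := lintegral_mono fun _ ↦ le_self_add
    _ ≤ ρ ^ N * ∫⁻ ω, potential X η θ 0 ω ∂P := hgrowth N le_rfl
    _ ≤ ρ ^ N * ∫⁻ ω, X 0 ω ^ (θ : ℝ) ∂P := by
        gcongr with ω
        exact potential_zero_le hsum ω

end IsSupermartingaleUpToFactor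

end MaximalInequality

lemma lintegral_mul_comp_of_indep {Ω α β : Type*} {𝓖 mΩ : MeasurableSpace Ω} [MeasurableSpace α]
    [mβ : MeasurableSpace β] {P : Measure Ω} [IsFiniteMeasure P] {g : Ω → ℝ≥0∞} {X : Ω → α}
    {D : Ω → β} {Φ : α × β → ℝ≥0∞} (h𝓖 : 𝓖 ≤ mΩ) (hg : Measurable[𝓖] g) (hX : Measurable[𝓖] X)
    (hD : Measurable D) (hindep : Indep (mβ.comap D) 𝓖 P) (hΦ : Measurable Φ) :
    ∫⁻ ω, g ω * Φ (X ω, D ω) ∂P = ∫⁻ ω, g ω * ∫⁻ u, Φ (X ω, u) ∂P.map D ∂P := by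
  have hgX : Measurable[𝓖] fun ω ↦ (g ω, X ω) := hg.prodMk hX
  have hgX' : Measurable fun ω ↦ (g ω, X ω) := hgX.mono h𝓖 le_rfl
  have hindepFun : IndepFun (fun ω ↦ (g ω, X ω)) D P :=
    indep_of_indep_of_le_left hindep.symm hgX.comap_le
  have hlaw := (indepFun_iff_map_prod_eq_prod_map_map hgX'.aemeasurable hD.aemeasurable).1 hindepFun
  have hΨ : Measurable fun z : (ℝ≥0∞ × α) × β ↦ z.1.1 * Φ (z.1.2, z.2) := by fun_prop
  calc ∫⁻ ω, g ω * Φ (X ω, D ω) ∂P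
      = ∫⁻ z, z.1.1 * Φ (z.1.2, z.2) ∂P.map fun ω ↦ ((g ω, X ω), D ω) :=
        (lintegral_map hΨ (hgX'.prodMk hD)).symm
    _ = ∫⁻ z, ∫⁻ u, z.1 * Φ (z.2, u) ∂P.map D ∂P.map fun ω ↦ (g ω, X ω) := by
        rw [hlaw, lintegral_prod _ hΨ.aemeasurable]
    _ = ∫⁻ ω, ∫⁻ u, g ω * Φ (X ω, u) ∂P.map D ∂P := lintegral_map hΨ.lintegral_prod_right' hgX'
    _ = ∫⁻ ω, g ω * ∫⁻ u, Φ (X ω, u) ∂P.map D ∂P := by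
        congr with ω
        exact lintegral_const_mul _ (by fun_prop)

section ImplicitStep

variable {E : Type*} [NormedAddCommGroup E] [InnerProductSpace ℝ E] {c h : ℝ} {b : E → E}
  {O : Set E} {x y z : E}

/-- The one-sided Lipschitz condition `⟪x - y, b x - b y⟫ ≤ c ‖x - y‖ ^ 2` on the set `O`. -/
def OneSidedLipschitzOn (c : ℝ) (b : E → E) (O : Set E) : Prop :=
  ∀ x ∈ O, ∀ y ∈ O, ⟪x - y, b x - b y⟫ ≤ c * ‖x - y‖ ^ 2

lemma OneSidedLipschitzOn.mul_norm_sub_le (hb : OneSidedLipschitzOn c b O) (hh : 0 ≤ h)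
    (hx : x ∈ O) (hy : y ∈ O) :
    (1 - h * c) * ‖x - y‖ ≤ ‖(x - h • b x) - (y - h • b y)‖ := by
  rcases (norm_nonneg (x - y)).eq_or_lt with hxy | hxy
  · rw [← hxy, mul_zero]
    positivity
  refine le_of_mul_le_mul_right ?_ hxy
  calc (1 - h * c) * ‖x - y‖ * ‖x - y‖
      ≤ ‖x - y‖ ^ 2 - h * ⟪x - y, b x - b y⟫ := by
        nlinarith [mul_le_mul_of_nonneg_left (hb x hx y hy) hh]
    _ = ⟪(x - h • b x) - (y - h • b y), x - y⟫ := by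
        rw [sub_sub_sub_comm, ← smul_sub, inner_sub_left (x - y), real_inner_smul_left,
          real_inner_self_eq_norm_sq, real_inner_comm]
    _ ≤ ‖(x - h • b x) - (y - h • b y)‖ * ‖x - y‖ := real_inner_le_norm _ _

lemma OneSidedLipschitzOn.injOn_sub_smul (hb : OneSidedLipschitzOn c b O) (hh : 0 ≤ h)
    (hhc : h * c < 1) : InjOn (fun x ↦ x - h • b x) O := by
  intro x hx y hy hxy
  have hnorm := hb.mul_norm_sub_le hh hx hy
  rw [show x - h • b x = y - h • b y from hxy, sub_self, norm_zero] at hnorm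
  exact sub_eq_zero.1 (norm_le_zero_iff.1 (nonpos_of_mul_nonpos_right hnorm (sub_pos.2 hhc)))

/-- The solution `x ∈ O` of the implicit equation `x = z + h • b x`; a junk value if there is
none. -/
def implicitStep (b : E → E) (O : Set E) (h : ℝ) (z : E) : E :=
  Function.invFunOn (fun x ↦ x - h • b x) O z

lemma implicitStep_mem (hsurj : SurjOn (fun x ↦ x - h • b x) O univ) (z : E) :
    implicitStep b O h z ∈ O :=
  Function.invFunOn_mem (hsurj (mem_univ z))

lemma implicitStep_sub_smul (hsurj : SurjOn (fun x ↦ x - h • b x) O univ) (z : E) :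
    implicitStep b O h z - h • b (implicitStep b O h z) = z :=
  Function.invFunOn_eq (hsurj (mem_univ z))

lemma OneSidedLipschitzOn.eq_implicitStep (hb : OneSidedLipschitzOn c b O) (hh : 0 ≤ h)
    (hhc : h * c < 1) (hx : x ∈ O) (hxz : x - h • b x = z) : x = implicitStep b O h z := by
  subst hxz
  exact ((hb.injOn_sub_smul hh hhc).leftInvOn_invFunOn hx).symm

lemma OneSidedLipschitzOn.lipschitzWith_implicitStep (hb : OneSidedLipschitzOn c b O) (hh : 0 ≤ h)
    (hhc : h * c < 1) (hsurj : SurjOn (fun x ↦ x - h • b x) O univ) :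
    LipschitzWith (1 - h * c)⁻¹.toNNReal (implicitStep b O h) := by
  have hpos : 0 < 1 - h * c := sub_pos.2 hhc
  refine LipschitzWith.of_dist_le_mul fun z z' ↦ ?_
  rw [Real.coe_toNNReal _ (inv_nonneg.2 hpos.le), inv_mul_eq_div, le_div_iff₀' hpos, dist_eq_norm,
    dist_eq_norm]
  simpa only [implicitStep_sub_smul hsurj] using
    hb.mul_norm_sub_le hh (implicitStep_mem hsurj z) (implicitStep_mem hsurj z')

lemma OneSidedLipschitzOn.norm_le {T : ℝ} (hb : OneSidedLipschitzOn c b O) (hh : h ∈ Ioc 0 T)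
    (hhc : h * (4 * c) ≤ 1) (hx : x ∈ O) (hy : y ∈ O) :
    ‖x‖ ≤ 2 * ‖x - h • b x‖ + (3 * ‖y‖ + 2 * T * ‖b y‖) := by
  have hstep : (3 / 4) * ‖x - y‖ ≤ ‖(x - h • b x) - (y - h • b y)‖ :=
    (mul_le_mul_of_nonneg_right (by linarith) (norm_nonneg _)).trans
      (hb.mul_norm_sub_le hh.1.le hx hy)
  have hbase : ‖y - h • b y‖ ≤ ‖y‖ + T * ‖b y‖ := by
    refine (norm_sub_le _ _).trans ?_
    rw [norm_smul, Real.norm_of_nonneg hh.1.le]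
    gcongr
    exact hh.2
  linarith [norm_le_norm_add_norm_sub' x y, norm_sub_le (x - h • b x) (y - h • b y),
    norm_nonneg (x - y)]

lemma OneSidedLipschitzOn.exists_one_add_norm_sq_le (hb : OneSidedLipschitzOn c b O) (T : ℝ) :
    ∃ K, 0 ≤ K ∧ ∀ h ∈ Ioc 0 T, h * (4 * c) ≤ 1 → ∀ x ∈ O,
      1 + ‖x‖ ^ 2 ≤ K * (1 + ‖x - h • b x‖ ^ 2) := by
  rcases O.eq_empty_or_nonempty with rfl | ⟨y, hy⟩
  · exact ⟨0, le_rfl, by simp⟩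
  set R := 3 * ‖y‖ + 2 * T * ‖b y‖
  refine ⟨9 + 2 * R ^ 2, by positivity, fun h hh hhc x hx ↦ ?_⟩
  have hnorm : ‖x‖ ≤ 2 * ‖x - h • b x‖ + R := hb.norm_le hh hhc hx hy
  have hsq := pow_le_pow_left₀ (norm_nonneg x) hnorm 2
  nlinarith [sq_nonneg (2 * ‖x - h • b x‖ - R), sq_nonneg (R * ‖x - h • b x‖)]

end ImplicitStep

section Noise

variable {Ω V : Type*} {mΩ : MeasurableSpace Ω} [NormedAddCommGroup V] [InnerProductSpace ℝ V]
  [MeasurableSpace V]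

/-- On `[0, T]` the process `W` is adapted to `F`, and its increments `W u - W s` are independent of
`F s` and centred Gaussian with covariance `(u - s) I`; the Gaussian law is encoded through all
one-dimensional projections. -/
structure HasBrownianIncrements (F : Filtration ℝ mΩ) (P : Measure Ω) (T : ℝ) (W : ℝ → Ω → V) :
    Prop where
  measurable : ∀ u ∈ Icc 0 T, Measurable[F u] (W u)
  map_inner_sub : ∀ s u, 0 ≤ s → s ≤ u → u ≤ T → ∀ l,
    P.map (fun ω ↦ ⟪l, W u ω - W s ω⟫) = gaussianReal 0 ((u - s) * ‖l‖ ^ 2).toNNReal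
  indep_sub : ∀ s u, 0 ≤ s → s ≤ u → u ≤ T →
    Indep (MeasurableSpace.comap (fun ω ↦ W u ω - W s ω) inferInstance) (F s) P

/-- The variables `D 0, …, D (N - 1)` are `ℱ`-adapted with a shift, `D n` being independent of
`ℱ n` and centred Gaussian with covariance `h I`. -/
structure IsGaussianNoise (ℱ : Filtration ℕ mΩ) (P : Measure Ω) (h : ℝ) (N : ℕ) (D : ℕ → Ω → V) :
    Prop where
  measurable : ∀ n < N, Measurable[ℱ (n + 1)] (D n)
  map_inner : ∀ n < N, ∀ l, P.map (fun ω ↦ ⟪l, D n ω⟫) = gaussianReal 0 (h * ‖l‖ ^ 2).toNNReal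
  indep : ∀ n < N, Indep (MeasurableSpace.comap (D n) inferInstance) (ℱ n) P

/-- The filtration `F` observed at the grid points `n h`. -/
def gridFiltration (F : Filtration ℝ mΩ) {h : ℝ} (hh : 0 ≤ h) : Filtration ℕ mΩ where
  seq n := F (n * h)
  mono' _ _ hij := F.mono (by gcongr)
  le' _ := F.le _

/-- The increment of `W` over the grid interval `[n h, (n + 1) h]`. -/
def gridIncrement (W : ℝ → Ω → V) (h : ℝ) (n : ℕ) (ω : Ω) : V :=
  W ((n + 1 : ℕ) * h) ω - W (n * h) ω

lemma HasBrownianIncrements.isGaussianNoise [BorelSpace V] [SecondCountableTopology V]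
    {F : Filtration ℝ mΩ} {P : Measure Ω} {T h : ℝ} {W : ℝ → Ω → V} {N : ℕ}
    (hW : HasBrownianIncrements F P T W) (hh : 0 ≤ h) (hN : N * h ≤ T) :
    IsGaussianNoise (gridFiltration F hh) P h N (gridIncrement W h) := by
  have hgrid {n : ℕ} (hn : n ≤ N) : (n : ℝ) * h ∈ Icc 0 T := ⟨by positivity, by grw [hn, hN]⟩
  have hstep (n : ℕ) : (n : ℝ) * h ≤ (n + 1 : ℕ) * h := by gcongr; exact n.le_succ
  refine ⟨fun n hn ↦ ?_, fun n hn l ↦ ?_, fun n hn ↦ ?_⟩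
  · exact (hW.measurable _ (hgrid hn)).sub
      ((hW.measurable _ (hgrid hn.le)).mono (F.mono (hstep n)) le_rfl)
  · have hlaw := hW.map_inner_sub _ _ (hgrid hn.le).1 (hstep n) (hgrid hn).2 l
    rwa [show ((n + 1 : ℕ) : ℝ) * h - n * h = h by push_cast; ring] at hlaw
  · exact hW.indep_sub _ _ (hgrid hn.le).1 (hstep n) (hgrid hn).2

end Noise

section ImplicitEuler

variable {Ω : Type*} {d m : ℕ} {O : Set (EuclideanSpace ℝ (Fin d))}
  {b : EuclideanSpace ℝ (Fin d) → EuclideanSpace ℝ (Fin d)}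
  {σ : EuclideanSpace ℝ (Fin d) → Matrix (Fin d) (Fin m) ℝ} {ξ : Ω → EuclideanSpace ℝ (Fin d)}
  {h : ℝ} {D : ℕ → Ω → EuclideanSpace ℝ (Fin m)}

/-- The drift-implicit Euler process with step size `h`, started at `ξ` and driven by the noise
increments `D`. -/
def implicitEuler (O : Set (EuclideanSpace ℝ (Fin d)))
    (b : EuclideanSpace ℝ (Fin d) → EuclideanSpace ℝ (Fin d))
    (σ : EuclideanSpace ℝ (Fin d) → Matrix (Fin d) (Fin m) ℝ) (ξ : Ω → EuclideanSpace ℝ (Fin d))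
    (h : ℝ) (D : ℕ → Ω → EuclideanSpace ℝ (Fin m)) : ℕ → Ω → EuclideanSpace ℝ (Fin d)
  | 0 => ξ
  | n + 1 => fun ω ↦ implicitStep b O h
      (implicitEuler O b σ ξ h D n ω + matMulVec (σ (implicitEuler O b σ ξ h D n ω)) (D n ω))

lemma implicitEuler_mem (hξ : ∀ ω, ξ ω ∈ O) (hsurj : SurjOn (fun x ↦ x - h • b x) O univ) (n : ℕ)
    (ω : Ω) : implicitEuler O b σ ξ h D n ω ∈ O := by
  cases n with
  | zero => exact hξ ω
  | succ n => exact implicitStep_mem hsurj _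

lemma implicitEuler_succ_sub_smul (hsurj : SurjOn (fun x ↦ x - h • b x) O univ) (n : ℕ) (ω : Ω) :
    implicitEuler O b σ ξ h D (n + 1) ω - h • b (implicitEuler O b σ ξ h D (n + 1) ω)
      = implicitEuler O b σ ξ h D n ω + matMulVec (σ (implicitEuler O b σ ξ h D n ω)) (D n ω) :=
  implicitStep_sub_smul hsurj _

lemma measurable_implicitEuler {mΩ : MeasurableSpace Ω} {ℱ : Filtration ℕ mΩ} {N : ℕ}
    (hξ : Measurable[ℱ 0] ξ) (hσ : ∀ i j, Measurable fun x ↦ σ x i j)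
    (hstep : Measurable (implicitStep b O h)) (hD : ∀ n < N, Measurable[ℱ (n + 1)] (D n)) {n : ℕ}
    (hn : n ≤ N) : Measurable[ℱ n] (implicitEuler O b σ ξ h D n) := by
  induction n with
  | zero => exact hξ
  | succ n ih =>
    have hY := (ih (by lia)).mono (ℱ.mono n.le_succ) le_rfl
    exact hstep.comp (hY.add (measurable_matMulVec (fun i j ↦ (hσ i j).comp hY) (hD n hn)))

theorem implicitEulerScheme_iff_eq_implicitEuler {T c : ℝ}
    {W : ℝ → Ω → EuclideanSpace ℝ (Fin m)} {Y : ℝ → ℕ → Ω → EuclideanSpace ℝ (Fin d)}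
    (hb : OneSidedLipschitzOn c b O)
    (hsurj : ∀ s : ℝ, 0 < s → s * c < 1 → SurjOn (fun x ↦ x - s • b x) O univ) :
    ImplicitEulerScheme d m T c O b σ ξ W Y ↔
      ∀ h ∈ Ioc 0 T, h * c < 1 → ∀ n : ℕ, (n : ℝ) ≤ T / h → ∀ ω,
        Y h n ω = implicitEuler O b σ ξ h (gridIncrement W h) n ω := by
  refine ⟨fun hY h hh hhc n ↦ ?_, fun hY h hh hhc ↦ ⟨fun ω ↦ ?_, fun n hn hnT ω ↦ ?_⟩⟩
  · obtain ⟨hinit, hrec⟩ := hY h hh hhc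
    induction n with
    | zero => exact fun _ ↦ hinit
    | succ n ih =>
      intro hn ω
      have hprev := ih (le_trans (by simp) hn) ω
      obtain ⟨hmem, heq⟩ := hrec (n + 1) (by lia) hn ω
      refine hb.eq_implicitStep hh.1.le hhc hmem ?_
      rw [← hprev, sub_eq_iff_eq_add, add_right_comm]
      exact heq
  · exact hY h hh hhc 0 (by simpa using div_nonneg (hh.1.le.trans hh.2) hh.1.le) ω
  · obtain ⟨n, rfl⟩ := Nat.exists_eq_add_of_le' hn
    have hprev := hY h hh hhc n (le_trans (by simp) hnT) ω
    have hstep := hsurj h hh.1 hhc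
    rw [hY h hh hhc _ hnT, Nat.add_sub_cancel, hprev, add_right_comm, ← sub_eq_iff_eq_add]
    exact ⟨implicitStep_mem hstep _, implicitEuler_succ_sub_smul hstep n ω⟩

end ImplicitEuler

section Lyapunov

variable {E : Type*} [NormedAddCommGroup E] {k : ℕ} {θ : ℝ≥0}

/-- The Lyapunov function `x ↦ (1 + ‖x‖ ^ 2) ^ (k + 1)` of the scheme. -/
def lyapunov (k : ℕ) (x : E) : ℝ≥0∞ := (1 + ‖x‖ₑ ^ 2) ^ (k + 1)

lemma one_add_enorm_sq (x : E) : 1 + ‖x‖ₑ ^ 2 = ENNReal.ofReal (1 + ‖x‖ ^ 2) := by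
  rw [← ofReal_norm, ENNReal.ofReal_add zero_le_one (sq_nonneg _), ENNReal.ofReal_one,
    ENNReal.ofReal_pow (norm_nonneg x)]

lemma lyapunov_le_mul_lyapunov {K : ℝ} {x z : E} (hK : 1 + ‖x‖ ^ 2 ≤ K * (1 + ‖z‖ ^ 2)) :
    lyapunov k x ≤ ENNReal.ofReal K ^ (k + 1) * lyapunov k z := by
  rw [lyapunov, lyapunov, ← mul_pow, one_add_enorm_sq, one_add_enorm_sq,
    ← ENNReal.ofReal_mul' (by positivity)]
  gcongr

lemma enorm_rpow_le_lyapunov_rpow (k : ℕ) (θ : ℝ≥0) (x : E) :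
    ‖x‖ₑ ^ (2 * (k + 1) * θ : ℝ) ≤ lyapunov k x ^ (θ : ℝ) := by
  rw [ENNReal.rpow_mul]
  gcongr
  calc ‖x‖ₑ ^ (2 * (k + 1) : ℝ) = (‖x‖ₑ ^ 2) ^ (k + 1) := by
        rw [← pow_mul, ← ENNReal.rpow_natCast]
        push_cast
        rfl
    _ ≤ lyapunov k x := by
        unfold lyapunov
        gcongr
        exact le_add_self

lemma lyapunov_rpow_le_one_add_enorm_rpow (k : ℕ) (θ : ℝ≥0) (x : E) :
    lyapunov k x ^ (θ : ℝ) ≤ (1 + ‖x‖ₑ) ^ (2 * (k + 1) * θ : ℝ) := by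
  rw [ENNReal.rpow_mul]
  gcongr
  calc lyapunov k x ≤ ((1 + ‖x‖ₑ) ^ 2) ^ (k + 1) := by
        unfold lyapunov
        gcongr
        rw [add_sq, one_pow, mul_one, add_right_comm]
        exact le_self_add
    _ = (1 + ‖x‖ₑ) ^ (2 * (k + 1) : ℝ) := by
        rw [← pow_mul, ← ENNReal.rpow_natCast]
        push_cast
        rfl

lemma lyapunov_sub_smul_rpow_le [NormedSpace ℝ E] {x y : E} {h T : ℝ} (hh : h ∈ Ioc 0 T) :
    lyapunov k (x - h • y) ^ (θ : ℝ)
      ≤ ‖1 + (1 + T) * (‖x‖ + ‖y‖)‖ₑ ^ (2 * (k + 1) * θ : ℝ) := by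
  have hT : 0 < T := hh.1.trans_le hh.2
  refine (lyapunov_rpow_le_one_add_enorm_rpow k θ _).trans ?_
  gcongr
  have hnorm : ‖x - h • y‖ ≤ (1 + T) * (‖x‖ + ‖y‖) :=
    calc ‖x - h • y‖ ≤ ‖x‖ + h * ‖y‖ := by
          grw [norm_sub_le, norm_smul, Real.norm_of_nonneg hh.1.le]
      _ ≤ (1 + T) * ‖x‖ + (1 + T) * ‖y‖ := by
          gcongr
          · exact le_mul_of_one_le_left (norm_nonneg _) (by linarith)
          · linarith [hh.2]
      _ = (1 + T) * (‖x‖ + ‖y‖) := by ring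
  rw [Real.enorm_of_nonneg (by positivity), ENNReal.ofReal_add zero_le_one (by positivity),
    ENNReal.ofReal_one, ← ofReal_norm]
  gcongr

@[fun_prop]
lemma measurable_lyapunov [MeasurableSpace E] [OpensMeasurableSpace E] :
    Measurable (lyapunov k : E → ℝ≥0∞) := by
  unfold lyapunov
  fun_prop

lemma one_add_norm_sq_add_le_exp_mul [InnerProductSpace ℝ E] {x y : E} {h s C K : ℝ} (hh : 0 ≤ h)
    (hC : 0 ≤ C) (hcoerc : 2 * ⟪x, y⟫ + s ≤ C * (1 + ‖x‖ ^ 2))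
    (hK : 1 + ‖x‖ ^ 2 ≤ K * (1 + ‖x - h • y‖ ^ 2)) :
    1 + ‖x‖ ^ 2 + h * s ≤ Real.exp (C * K * h) * (1 + ‖x - h • y‖ ^ 2) := by
  have hsq : ‖x‖ ^ 2 - 2 * h * ⟪x, y⟫ ≤ ‖x - h • y‖ ^ 2 := by
    rw [norm_sub_sq_real, real_inner_smul_right]
    nlinarith [sq_nonneg ‖h • y‖]
  calc 1 + ‖x‖ ^ 2 + h * s
      ≤ 1 + ‖x - h • y‖ ^ 2 + h * (2 * ⟪x, y⟫ + s) := by linarith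
    _ ≤ 1 + ‖x - h • y‖ ^ 2 + h * (C * (K * (1 + ‖x - h • y‖ ^ 2))) := by
        gcongr
        exact hcoerc.trans (by gcongr)
    _ = (C * K * h + 1) * (1 + ‖x - h • y‖ ^ 2) := by ring
    _ ≤ Real.exp (C * K * h) * (1 + ‖x - h • y‖ ^ 2) := by
        gcongr
        exact Real.add_one_le_exp _

end Lyapunov

lemma enorm_iSup_le {ι : Sort*} {f : ι → ℝ} {M : ℝ≥0∞} (hf : ∀ i, ‖f i‖ₑ ≤ M) :
    ‖⨆ i, f i‖ₑ ≤ M := by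
  cases isEmpty_or_nonempty ι with
  | inl _ => simp
  | inr hι =>
    cases M with
    | top => exact le_top
    | coe M =>
      have hf' (i : ι) : -M ≤ f i ∧ f i ≤ M := by
        rw [← abs_le, ← Real.norm_eq_abs, ← coe_nnnorm]
        exact_mod_cast hf i
      have hbdd : BddAbove (range f) := ⟨M, forall_mem_range.2 fun i ↦ (hf' i).2⟩
      have i := hι.some
      have habs : |⨆ i, f i| ≤ M :=
        abs_le.2 ⟨(hf' i).1.trans (le_ciSup hbdd i), ciSup_le fun i ↦ (hf' i).2⟩
      rw [← Real.norm_eq_abs, ← coe_nnnorm] at habs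
      exact_mod_cast habs

section Moments

variable {Ω : Type*} {mΩ : MeasurableSpace Ω} {P : Measure Ω} [IsProbabilityMeasure P] {d m : ℕ}
  {O : Set (EuclideanSpace ℝ (Fin d))} {b : EuclideanSpace ℝ (Fin d) → EuclideanSpace ℝ (Fin d)}
  {σ : EuclideanSpace ℝ (Fin d) → Matrix (Fin d) (Fin m) ℝ} {ξ : Ω → EuclideanSpace ℝ (Fin d)}
  {k : ℕ}

section FixedStep

variable {ℱ : Filtration ℕ mΩ} {h r K : ℝ} {N : ℕ} {D : ℕ → Ω → EuclideanSpace ℝ (Fin m)}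

theorem isSupermartingaleUpToFactor_lyapunov_implicitEuler (hh : 0 ≤ h)
    (hD : IsGaussianNoise ℱ P h N D) (hξ : Measurable[ℱ 0] ξ) (hξO : ∀ ω, ξ ω ∈ O)
    (hb : Measurable b) (hσ : ∀ i j, Measurable fun x ↦ σ x i j)
    (hstep : Measurable (implicitStep b O h)) (hsurj : SurjOn (fun x ↦ x - h • b x) O univ)
    (hr : ∀ x ∈ O, 1 + ‖x‖ ^ 2 + (2 * k + 1) * h * ‖σ x‖ ^ 2 ≤ r * (1 + ‖x - h • b x‖ ^ 2)) :
    IsSupermartingaleUpToFactor ℱ P (fun n ω ↦ lyapunov k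
      (implicitEuler O b σ ξ h D n ω - h • b (implicitEuler O b σ ξ h D n ω)))
      (ENNReal.ofReal r ^ (k + 1)) N := by
  set Y := implicitEuler O b σ ξ h D
  have hY {n : ℕ} (hn : n ≤ N) : Measurable[ℱ n] (Y n) :=
    measurable_implicitEuler hξ hσ hstep hD.measurable hn
  refine ⟨fun n hn ↦ ?_, fun n hn g hg ↦ ?_⟩
  · exact measurable_lyapunov.comp ((hY hn).sub ((hb.comp (hY hn)).const_smul h))
  have hDn : Measurable (D n) := (hD.measurable n hn).mono (ℱ.le _) le_rfl
  have := Measure.isProbabilityMeasure_map (μ := P) hDn.aemeasurable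
  have hlaw (l : EuclideanSpace ℝ (Fin m)) :
      (P.map (D n)).map (fun u ↦ ⟪l, u⟫) = gaussianReal 0 (h * ‖l‖ ^ 2).toNNReal := by
    rw [Measure.map_map (by fun_prop) hDn]
    exact hD.map_inner n hn l
  have hΦ : Measurable fun z : EuclideanSpace ℝ (Fin d) × EuclideanSpace ℝ (Fin m) ↦
      lyapunov k (z.1 + matMulVec (σ z.1) z.2) :=
    measurable_lyapunov.comp (measurable_fst.add
      (measurable_matMulVec (fun i j ↦ (hσ i j).comp measurable_fst) measurable_snd))
  calc ∫⁻ ω, g ω * lyapunov k (Y (n + 1) ω - h • b (Y (n + 1) ω)) ∂P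
      = ∫⁻ ω, g ω * lyapunov k (Y n ω + matMulVec (σ (Y n ω)) (D n ω)) ∂P := by
        simp only [Y, implicitEuler_succ_sub_smul hsurj]
    _ = ∫⁻ ω, g ω * ∫⁻ u, lyapunov k (Y n ω + matMulVec (σ (Y n ω)) u) ∂P.map (D n) ∂P :=
        lintegral_mul_comp_of_indep (ℱ.le n) hg (hY hn.le) hDn (hD.indep n hn) hΦ
    _ ≤ ∫⁻ ω, ENNReal.ofReal r ^ (k + 1) * (g ω * lyapunov k (Y n ω - h • b (Y n ω))) ∂P := by
        refine lintegral_mono fun ω ↦ ?_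
        rw [mul_left_comm]
        gcongr
        refine (lintegral_one_add_enorm_add_matMulVec_sq_pow_le hh hlaw _ _ k).trans ?_
        rw [lyapunov, one_add_enorm_sq, ← mul_pow, ← ENNReal.ofReal_mul' (by positivity)]
        gcongr
        exact hr _ (implicitEuler_mem hξO hsurj n ω)
    _ = _ := lintegral_const_mul' _ _ (by finiteness)

theorem mul_lintegral_partialSups_lyapunov_implicitEuler_rpow_le {η θ : ℝ≥0} (hη : η ≠ 0)
    (hθ : θ ≠ 0) (hsum : η + θ = 1) (hr1 : 1 ≤ r) (hh : 0 ≤ h)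
    (hD : IsGaussianNoise ℱ P h N D) (hξ : Measurable[ℱ 0] ξ) (hξO : ∀ ω, ξ ω ∈ O)
    (hb : Measurable b) (hσ : ∀ i j, Measurable fun x ↦ σ x i j)
    (hstep : Measurable (implicitStep b O h)) (hsurj : SurjOn (fun x ↦ x - h • b x) O univ)
    (hr : ∀ x ∈ O, 1 + ‖x‖ ^ 2 + (2 * k + 1) * h * ‖σ x‖ ^ 2 ≤ r * (1 + ‖x - h • b x‖ ^ 2))
    (hK : ∀ x ∈ O, 1 + ‖x‖ ^ 2 ≤ K * (1 + ‖x - h • b x‖ ^ 2)) :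
    η * ∫⁻ ω, partialSups (fun n ω ↦ lyapunov k (implicitEuler O b σ ξ h D n ω)) N ω ^ (θ : ℝ) ∂P
      ≤ (ENNReal.ofReal K ^ (k + 1)) ^ (θ : ℝ) * ((ENNReal.ofReal r ^ (k + 1)) ^ N *
        ∫⁻ ω, lyapunov k (ξ ω - h • b (ξ ω)) ^ (θ : ℝ) ∂P) := by
  set Y := implicitEuler O b σ ξ h D
  set X : ℕ → Ω → ℝ≥0∞ := fun n ω ↦ lyapunov k (Y n ω - h • b (Y n ω))
  have hX : IsSupermartingaleUpToFactor ℱ P X (ENNReal.ofReal r ^ (k + 1)) N :=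
    isSupermartingaleUpToFactor_lyapunov_implicitEuler hh hD hξ hξO hb hσ hstep hsurj hr
  have hsup : partialSups (fun n ω ↦ lyapunov k (Y n ω)) N
      ≤ fun ω ↦ ENNReal.ofReal K ^ (k + 1) * partialSups X N ω :=
    partialSups_le _ _ _ fun n hn ω ↦
      (lyapunov_le_mul_lyapunov (hK _ (implicitEuler_mem hξO hsurj n ω))).trans
        (by gcongr; exact le_partialSups_of_le X hn ω)
  calc η * ∫⁻ ω, partialSups (fun n ω ↦ lyapunov k (Y n ω)) N ω ^ (θ : ℝ) ∂P
      ≤ η * ∫⁻ ω, (ENNReal.ofReal K ^ (k + 1)) ^ (θ : ℝ) * partialSups X N ω ^ (θ : ℝ) ∂P := by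
        gcongr with ω
        rw [← ENNReal.mul_rpow_of_nonneg _ _ θ.coe_nonneg]
        gcongr
        exact hsup ω
    _ = (ENNReal.ofReal K ^ (k + 1)) ^ (θ : ℝ) *
          (η * ∫⁻ ω, partialSups X N ω ^ (θ : ℝ) ∂P) := by
        rw [lintegral_const_mul' _ _ (by finiteness), mul_left_comm]
    _ ≤ _ := mul_le_mul_right (hX.mul_lintegral_partialSups_rpow_le
        (one_le_pow₀ (ENNReal.one_le_ofReal.2 hr1)) hη hθ hsum) _

end FixedStep

lemma lintegral_one_add_mul_rpow_lt_top {f : Ω → ℝ} {p : ℝ} (a : ℝ) (hp : 0 < p)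
    (hf : MemLp f (ENNReal.ofReal p) P) : ∫⁻ ω, ‖1 + a * f ω‖ₑ ^ p ∂P < ∞ := by
  have hMemLp : MemLp (fun ω ↦ 1 + a * f ω) (ENNReal.ofReal p) P :=
    (memLp_const (1 : ℝ)).add (hf.const_mul a)
  have hfin := lintegral_rpow_enorm_lt_top_of_eLpNorm_lt_top (ENNReal.ofReal_pos.2 hp).ne'
    ENNReal.ofReal_ne_top hMemLp.2
  rwa [ENNReal.toReal_ofReal hp.le] at hfin

lemma ofReal_exp_mul_pow_pow_le {a h T : ℝ} {N : ℕ} (n : ℕ) (ha : 0 ≤ a) (hN : N * h ≤ T) :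
    (ENNReal.ofReal (Real.exp (a * h)) ^ n) ^ N ≤ ENNReal.ofReal (Real.exp (a * T)) ^ n := by
  rw [pow_right_comm, ← ENNReal.ofReal_pow (Real.exp_nonneg _), ← Real.exp_nat_mul]
  refine pow_le_pow_left' (ENNReal.ofReal_le_ofReal (Real.exp_le_exp.2 ?_)) _
  rw [mul_left_comm]
  gcongr

theorem exists_lintegral_partialSups_lyapunov_implicitEuler_rpow_le {F : Filtration ℝ mΩ}
    {W : ℝ → Ω → EuclideanSpace ℝ (Fin m)} {c C T : ℝ} {θ : ℝ≥0} (hθ : θ ≠ 0) (hθ1 : θ < 1)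
    (hW : HasBrownianIncrements F P T W) (hξ : Measurable[F 0] ξ)
    (hξO : ∀ ω, ξ ω ∈ O)
    (hξp : eLpNorm (fun ω ↦ ‖ξ ω‖ + ‖b (ξ ω)‖) (ENNReal.ofReal (2 * (k + 1) * θ)) P < ∞)
    (hbm : Measurable b) (hσ : ∀ i j, Measurable fun x ↦ σ x i j) (hb : OneSidedLipschitzOn c b O)
    (hC : 0 ≤ C) (hcoerc : ∀ x ∈ O, 2 * ⟪x, b x⟫ + (2 * k + 1) * ‖σ x‖ ^ 2 ≤ C * (1 + ‖x‖ ^ 2))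
    (hsurj : ∀ s : ℝ, 0 < s → s * c < 1 → SurjOn (fun x ↦ x - s • b x) O univ) :
    ∃ B : ℝ≥0∞, B ≠ ∞ ∧ ∀ h ∈ Ioc 0 T, h * (4 * c) ≤ 1 →
      ∫⁻ ω, partialSups (fun n ω ↦ lyapunov k
        (implicitEuler O b σ ξ h (gridIncrement W h) n ω)) ⌊T / h⌋₊ ω ^ (θ : ℝ) ∂P ≤ B := by
  obtain ⟨K, hK0, hK⟩ := hb.exists_one_add_norm_sq_le T
  have hη : 1 - θ ≠ 0 := (tsub_pos_of_lt hθ1).ne'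
  have hsum : 1 - θ + θ = 1 := tsub_add_cancel_of_le hθ1.le
  have hξm : Measurable ξ := hξ.mono (F.le 0) le_rfl
  have hξfin := lintegral_one_add_mul_rpow_lt_top (f := fun ω ↦ ‖ξ ω‖ + ‖b (ξ ω)‖) (1 + T)
    (by positivity) ⟨(by fun_prop : Measurable _).aestronglyMeasurable, hξp⟩
  refine ⟨(ENNReal.ofReal K ^ (k + 1)) ^ (θ : ℝ) *
    (ENNReal.ofReal (Real.exp (C * K * T)) ^ (k + 1) *
    ∫⁻ ω, ‖1 + (1 + T) * (‖ξ ω‖ + ‖b (ξ ω)‖)‖ₑ ^ (2 * (k + 1) * θ : ℝ) ∂P) / (1 - θ : ℝ≥0), ?_,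
    fun h hh hhc ↦ ?_⟩
  · have hξne := hξfin.ne
    have hη' : ((1 - θ : ℝ≥0) : ℝ≥0∞) ≠ 0 := ENNReal.coe_ne_zero.2 hη
    finiteness
  have hhc' : h * c < 1 := by linarith
  have hN : (⌊T / h⌋₊ : ℝ) * h ≤ T :=
    (le_div_iff₀ hh.1).1 (Nat.floor_le (div_nonneg (hh.1.le.trans hh.2) hh.1.le))
  have hstep := (hb.lipschitzWith_implicitStep hh.1.le hhc' (hsurj h hh.1 hhc')).continuous
  have hr1 : 1 ≤ Real.exp (C * K * h) :=
    Real.one_le_exp (mul_nonneg (mul_nonneg hC hK0) hh.1.le)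
  have hr (x) (hx : x ∈ O) : 1 + ‖x‖ ^ 2 + (2 * k + 1) * h * ‖σ x‖ ^ 2
      ≤ Real.exp (C * K * h) * (1 + ‖x - h • b x‖ ^ 2) := by
    rw [mul_right_comm, mul_comm _ h]
    exact one_add_norm_sq_add_le_exp_mul hh.1.le hC (hcoerc x hx) (hK h hh hhc x hx)
  rw [ENNReal.le_div_iff_mul_le (.inl (ENNReal.coe_ne_zero.2 hη)) (.inl ENNReal.coe_ne_top),
    mul_comm]
  refine (mul_lintegral_partialSups_lyapunov_implicitEuler_rpow_le hη hθ hsum hr1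
    hh.1.le
    (hW.isGaussianNoise hh.1.le hN) (hξ.mono (F.mono (by simp)) le_rfl) hξO hbm hσ
    hstep.measurable (hsurj h hh.1 hhc') hr (hK h hh hhc)).trans ?_
  grw [ofReal_exp_mul_pow_pow_le _ (mul_nonneg hC hK0) hN]
  gcongr
  exact lyapunov_sub_smul_rpow_le hh

end Moments

lemma eLpNorm_iSup_norm_le_lintegral_partialSups_lyapunov {Ω E : Type*}
    {mΩ : MeasurableSpace Ω} {P : Measure Ω} [NormedAddCommGroup E] {Y : ℕ → Ω → E} {k : ℕ}
    {θ : ℝ≥0} {R : ℝ} (hθ : θ ≠ 0) :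
    eLpNorm (fun ω ↦ ⨆ n : ℕ, ⨆ _ : (n : ℝ) ≤ R, ‖Y n ω‖) (ENNReal.ofReal (2 * (k + 1) * θ)) P
      ≤ (∫⁻ ω, partialSups (fun n ω ↦ lyapunov k (Y n ω)) ⌊R⌋₊ ω ^ (θ : ℝ) ∂P)
        ^ (1 / (2 * (k + 1) * θ) : ℝ) := by
  have hp : (0 : ℝ) < 2 * (k + 1) * θ := by positivity
  rw [eLpNorm_eq_lintegral_rpow_enorm_toReal (ENNReal.ofReal_pos.2 hp).ne' ENNReal.ofReal_ne_top,
    ENNReal.toReal_ofReal hp.le]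
  gcongr with ω
  rw [← ENNReal.le_rpow_inv_iff hp]
  refine enorm_iSup_le fun n ↦ enorm_iSup_le fun hn ↦ ?_
  rw [enorm_norm, ENNReal.le_rpow_inv_iff hp]
  refine (enorm_rpow_le_lyapunov_rpow k θ (Y n ω)).trans ?_
  gcongr
  exact le_partialSups_of_le (fun n ω ↦ lyapunov k (Y n ω)) (Nat.le_floor hn) ω

section Growth

lemma sq_le_mul_one_add_sq_of_le_one_add_rpow {a t ct cbar : ℝ} (ha : 0 ≤ a) (ht : 0 ≤ t)
    (hct : 0 ≤ ct) (hcbar : 0 ≤ cbar) (hcbar1 : cbar ≤ 1) (hgrowth : a ≤ ct * (1 + t ^ cbar)) :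
    a ^ 2 ≤ 5 * ct ^ 2 * (1 + t ^ 2) := by
  have hrpow : t ^ cbar ≤ 1 + t :=
    calc t ^ cbar ≤ (1 + t) ^ cbar := by gcongr; linarith
      _ ≤ 1 + t := Real.rpow_le_self_of_one_le (by linarith) hcbar1
  calc a ^ 2 ≤ (ct * (1 + (1 + t))) ^ 2 := by grw [hgrowth, hrpow]
    _ = ct ^ 2 * (2 + t) ^ 2 := by ring
    _ ≤ ct ^ 2 * (5 * (1 + t ^ 2)) := by
        gcongr
        nlinarith [sq_nonneg (2 * t - 1)]
    _ = 5 * ct ^ 2 * (1 + t ^ 2) := by ring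

lemma two_mul_inner_add_mul_le {E : Type*} [NormedAddCommGroup E] [InnerProductSpace ℝ E] {x y : E}
    {q r s ct : ℝ} (hrq : r ≤ q) (hs : 0 ≤ s) (hcoerc : ⟪x, y⟫ + q / 2 * s ≤ ct * (1 + ‖x‖ ^ 2)) :
    2 * ⟪x, y⟫ + r * s ≤ 2 * ct * (1 + ‖x‖ ^ 2) := by
  have hrs : r * s ≤ q * s := by gcongr
  linarith

theorem exists_two_mul_inner_add_mul_norm_sq_le {E A : Type*} [NormedAddCommGroup E]
    [InnerProductSpace ℝ E] [SeminormedAddCommGroup A] {O : Set E} {b : E → E} {σ : E → A}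
    {q r ct cbar : ℝ} (hcbar : 0 ≤ cbar) (hct : 0 ≤ ct) (hq : 0 ≤ q) (hr : 0 ≤ r)
    (hrq : 1 < cbar → r ≤ q) (hgrowth : ∀ x ∈ O, ‖σ x‖ ≤ ct * (1 + ‖x‖ ^ cbar))
    (hcoerc : ∀ x ∈ O, ⟪x, b x⟫ + q / 2 * ‖σ x‖ ^ 2 ≤ ct * (1 + ‖x‖ ^ 2)) :
    ∃ C, 0 ≤ C ∧ ∀ x ∈ O, 2 * ⟪x, b x⟫ + r * ‖σ x‖ ^ 2 ≤ C * (1 + ‖x‖ ^ 2) := by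
  rcases le_or_gt cbar 1 with hcbar1 | hcbar1
  · refine ⟨2 * ct + r * (5 * ct ^ 2), by positivity, fun x hx ↦ ?_⟩
    have hdrift := two_mul_inner_add_mul_le hq (sq_nonneg _) (hcoerc x hx)
    have hdiffusion := sq_le_mul_one_add_sq_of_le_one_add_rpow (norm_nonneg _) (norm_nonneg x)
      hct hcbar hcbar1 (hgrowth x hx)
    calc 2 * ⟪x, b x⟫ + r * ‖σ x‖ ^ 2
        ≤ 2 * ct * (1 + ‖x‖ ^ 2) + r * (5 * ct ^ 2 * (1 + ‖x‖ ^ 2)) :=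
          add_le_add (by linarith) (by gcongr)
      _ = (2 * ct + r * (5 * ct ^ 2)) * (1 + ‖x‖ ^ 2) := by ring
  · exact ⟨2 * ct, by positivity, fun x hx ↦
      two_mul_inner_add_mul_le (hrq hcbar1) (sq_nonneg _) (hcoerc x hx)⟩

end Growth

theorem uniform_moment_bounds_for_drift_implicit_Euler_approximations_general {Ω : Type*}
    {mΩ : MeasurableSpace Ω} {P : Measure Ω} [IsProbabilityMeasure P] {d m k : ℕ} {c C T p : ℝ}
    {O : Set (EuclideanSpace ℝ (Fin d))} {b : EuclideanSpace ℝ (Fin d) → EuclideanSpace ℝ (Fin d)}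
    {σ : EuclideanSpace ℝ (Fin d) → Matrix (Fin d) (Fin m) ℝ} {ξ : Ω → EuclideanSpace ℝ (Fin d)}
    {F : Filtration ℝ mΩ} {W : ℝ → Ω → EuclideanSpace ℝ (Fin m)} (hp : 0 < p)
    (hpk : p < 2 * (k + 1)) (hW : HasBrownianIncrements F P T W) (hξ : Measurable[F 0] ξ)
    (hξO : ∀ ω, ξ ω ∈ O)
    (hξp : eLpNorm (fun ω ↦ ‖ξ ω‖ + ‖b (ξ ω)‖) (ENNReal.ofReal p) P < ∞)
    (hbm : Measurable b) (hσ : ∀ i j, Measurable fun x ↦ σ x i j) (hb : OneSidedLipschitzOn c b O)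
    (hC : 0 ≤ C) (hcoerc : ∀ x ∈ O, 2 * ⟪x, b x⟫ + (2 * k + 1) * ‖σ x‖ ^ 2 ≤ C * (1 + ‖x‖ ^ 2))
    (hsurj : ∀ s : ℝ, 0 < s → s * c < 1 → SurjOn (fun x ↦ x - s • b x) O univ) :
    ∃ Y : ℝ → ℕ → Ω → EuclideanSpace ℝ (Fin d),
      ImplicitEulerScheme d m T c O b σ ξ W Y ∧
      (∀ Y' : ℝ → ℕ → Ω → EuclideanSpace ℝ (Fin d), ImplicitEulerScheme d m T c O b σ ξ W Y' →
        ∀ h ∈ Ioc 0 T, h * c < 1 → ∀ n : ℕ, (n : ℝ) ≤ T / h → ∀ ω, Y' h n ω = Y h n ω) ∧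
      (⨆ h : ℝ, ⨆ _ : h ∈ Ioc 0 T, ⨆ _ : h * (4 * c) ≤ 1,
        eLpNorm (fun ω ↦ ⨆ n : ℕ, ⨆ _ : (n : ℝ) ≤ T / h, ‖Y h n ω‖) (ENNReal.ofReal p) P) < ∞ := by
  have hscheme {Y : ℝ → ℕ → Ω → EuclideanSpace ℝ (Fin d)} :=
    implicitEulerScheme_iff_eq_implicitEuler (T := T) (σ := σ) (ξ := ξ) (W := W) (Y := Y) hb hsurj
  refine ⟨fun h ↦ implicitEuler O b σ ξ h (gridIncrement W h),
    hscheme.2 fun _ _ _ _ _ _ ↦ rfl, fun Y' ↦ hscheme.1, ?_⟩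
  obtain ⟨θ, rfl⟩ : ∃ θ : ℝ≥0, p = 2 * (k + 1) * θ :=
    ⟨⟨p / (2 * (k + 1)), by positivity⟩, (mul_div_cancel₀ p (by positivity)).symm⟩
  have hθ : θ ≠ 0 := by
    rintro rfl
    simp at hp
  have hθ1 : θ < 1 := by
    rw [mul_lt_iff_lt_one_right (by positivity)] at hpk
    exact_mod_cast hpk
  obtain ⟨B, hB, hle⟩ := exists_lintegral_partialSups_lyapunov_implicitEuler_rpow_le hθ hθ1 hW hξ
    hξO hξp hbm hσ hb hC hcoerc hsurj
  refine (iSup_le fun h ↦ iSup₂_le fun hh hhc ↦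
    (eLpNorm_iSup_norm_le_lintegral_partialSups_lyapunov hθ).trans ?_).trans_lt
      (ENNReal.rpow_lt_top_of_nonneg (y := 1 / (2 * (k + 1) * θ)) (by positivity) hB)
  gcongr
  exact hle h hh hhc

theorem uniform_moment_bounds_for_drift_implicit_Euler_approximations
    {Ω : Type*} [MeasurableSpace Ω] (P : Measure Ω) [IsProbabilityMeasure P]
    (d m : ℕ) (hd : 0 < d) (hm : 0 < m)
    (cdrift cbar ct T p : ℝ)
    (hcdrift : 0 ≤ cdrift) (hcbar : 0 ≤ cbar) (hct : 0 ≤ ct) (hT : 0 ≤ T) (hp : 2 ≤ p)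
    (O : Set (EuclideanSpace ℝ (Fin d))) (hO : MeasurableSet O)
    (b : EuclideanSpace ℝ (Fin d) → EuclideanSpace ℝ (Fin d)) (hbmeas : Measurable b)
    (σ : EuclideanSpace ℝ (Fin d) → Matrix (Fin d) (Fin m) ℝ)
    (hσmeas : ∀ i j, Measurable (fun x => σ x i j))
    (F : ℝ → MeasurableSpace Ω)
    (hF_mono : ∀ s u : ℝ, s ≤ u → F s ≤ F u)
    (hF_le : ∀ u : ℝ, F u ≤ (inferInstance : MeasurableSpace Ω))
    (W : ℝ → Ω → EuclideanSpace ℝ (Fin m))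
    (hW0 : ∀ ω, W 0 ω = 0)
    (hWadapt : ∀ u ∈ Set.Icc (0:ℝ) T, @Measurable Ω _ (F u) _ (W u))
    (hWcont : ∀ ω, ContinuousOn (fun u => W u ω) (Set.Icc 0 T))
    (hWlaw : ∀ s u : ℝ, 0 ≤ s → s ≤ u → u ≤ T → ∀ l : EuclideanSpace ℝ (Fin m),
      Measure.map (fun ω => ⟪l, W u ω - W s ω⟫) P
        = gaussianReal 0 (Real.toNNReal ((u - s) * ‖l‖ ^ 2)))
    (hWindep : ∀ s u : ℝ, 0 ≤ s → s ≤ u → u ≤ T →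
      Indep (MeasurableSpace.comap (fun ω => W u ω - W s ω) inferInstance) (F s) P)
    (ξ : Ω → EuclideanSpace ℝ (Fin d))
    (hξmeas : @Measurable Ω _ (F 0) _ ξ) (hξO : ∀ ω, ξ ω ∈ O)
    (hξmom : eLpNorm (fun ω => ‖ξ ω‖ + ‖b (ξ ω)‖)
      (ENNReal.ofReal ((cbar + max 1 cbar) * p)) P < ⊤)
    (hσgrowth : ∀ x ∈ O, ‖σ x‖ ≤ ct * (1 + ‖x‖ ^ cbar))
    (hmono : ∀ x ∈ O, ∀ y ∈ O, ⟪x - y, b x - b y⟫ ≤ cdrift * ‖x - y‖ ^ 2)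
    (hcoerc : ∀ x ∈ O,
      ⟪x, b x⟫ + ((cbar + max 1 cbar) * p - 1) / 2 * ‖σ x‖ ^ 2 ≤ ct * (1 + ‖x‖ ^ 2))
    (hsurj : ∀ s : ℝ, 0 < s → s * cdrift < 1 →
      Set.SurjOn (fun x => x - s • b x) O Set.univ) :
    ∃ Y : ℝ → ℕ → Ω → EuclideanSpace ℝ (Fin d),
      ImplicitEulerScheme d m T cdrift O b σ ξ W Y ∧
      (∀ Y' : ℝ → ℕ → Ω → EuclideanSpace ℝ (Fin d),
        ImplicitEulerScheme d m T cdrift O b σ ξ W Y' →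
        ∀ h : ℝ, h ∈ Set.Ioc (0:ℝ) T → h * cdrift < 1 →
          ∀ n : ℕ, (n : ℝ) ≤ T / h → ∀ ω, Y' h n ω = Y h n ω) ∧
      (⨆ h : ℝ, ⨆ _ : h ∈ Set.Ioc (0:ℝ) T, ⨆ _ : h * (4 * cdrift) ≤ 1,
          eLpNorm (fun ω => ⨆ n : ℕ, ⨆ _ : (n : ℝ) ≤ T / h, ‖Y h n ω‖)
            (ENNReal.ofReal p) P) < ⊤ := by
  have hcoef : 1 < cbar → (2 * ⌊p / 2⌋₊ + 1 : ℝ) ≤ (cbar + max 1 cbar) * p - 1 := fun hcbar1 ↦ by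
    rw [max_eq_right hcbar1.le]
    nlinarith [Nat.floor_le (show 0 ≤ p / 2 by positivity)]
  have hexponent : p ≤ (cbar + max 1 cbar) * p :=
    le_mul_of_one_le_left (by positivity) (by linarith [le_max_left 1 cbar])
  obtain ⟨C, hC, hcoerc'⟩ := exists_two_mul_inner_add_mul_norm_sq_le hcbar hct
    (by linarith) (by positivity) hcoef hσgrowth hcoerc
  have hξm : Measurable ξ := hξmeas.mono (hF_le 0) le_rfl
  refine uniform_moment_bounds_for_drift_implicit_Euler_approximations_general
    (F := ⟨F, hF_mono, hF_le⟩) (by positivity) (by linarith [Nat.lt_floor_add_one (p / 2)])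
    ⟨hWadapt, hWlaw, hWindep⟩ hξmeas hξO ?_ hbmeas hσmeas hmono hC hcoerc' hsurj
  exact (eLpNorm_le_eLpNorm_of_exponent_le (ENNReal.ofReal_le_ofReal hexponent)
    (by fun_prop : Measurable fun ω ↦ ‖ξ ω‖ + ‖b (ξ ω)‖).aestronglyMeasurable).trans_lt hξmom

end
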